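/- (Counting connected components in the point-interval setting.) Let V be a finite vertex type with |V| = n, G a simple graph on V, and t : Sym2 V → ℝ a timestamp function injective on the edge set of G. Fix reals t₁ ≤ t₂, let G_{≤t₂} be the subgraph of G with edges e satisfying t(e) ≤ t₂, assume G_{≤t₂} is connected, and let T be a spanning tree of G_{≤t₂} maximizing Σ_{e ∈ edges(T)} t(e) among spanning trees of G_{≤t₂}. Then the number of connected components of the subgraph G_{[t₁,t₂]} of G consisting of the edges e with t₁ ≤ t(e) ≤ t₂ equals n minus the number of edges e of T with t(e) ≥ t₁. -/

import Mathlib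

/-!
Deleting an edge of a forest splits exactly one component in two, so a forest on `n` vertices with
`k` edges has `n - k` components. It therefore suffices that, for every threshold `θ`, the edges of
weight at least `θ` in a maximum-weight spanning tree `T` of `G` connect the same pairs of vertices
as the edges of weight at least `θ` in `G`. This is the exchange argument: if the edge `uv` of `G`
has weight at least `θ`, then so has every edge `f` on the path of `T` from `u` to `v`, because
replacing `f` by `uv` in `T` gives another spanning tree.
-/

section Graph

open SimpleGraph

variable {V : Type*} {G H : SimpleGraph V} {u v : V} {e : Sym2 V}

lemma reachable_le_reachable_of_adj_le_reachable (h : G.Adj ≤ H.Reachable) :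
    G.Reachable ≤ H.Reachable := by
  rintro x y ⟨p⟩
  induction p with
  | nil => exact .rfl
  | cons hxz _ ih => exact (h _ _ hxz).trans ih

lemma reachable_deleteEdges_singleton_or (a b : V) {x y : V} (h : G.Reachable x y) :
    (G.deleteEdges {s(a, b)}).Reachable x y ∨
      ((G.deleteEdges {s(a, b)}).Reachable x a ∧ (G.deleteEdges {s(a, b)}).Reachable b y) ∨
      ((G.deleteEdges {s(a, b)}).Reachable x b ∧ (G.deleteEdges {s(a, b)}).Reachable a y) := by
  obtain ⟨p⟩ := h
  induction p with
  | nil => exact .inl .rfl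
  | @cons x z y hxz _ ih =>
    by_cases hab : s(x, z) = s(a, b)
    · obtain ⟨rfl, rfl⟩ | ⟨rfl, rfl⟩ := Sym2.eq_iff.1 hab
      · obtain hby | ⟨-, hby⟩ | ⟨-, hay⟩ := ih
        exacts [.inr (.inl ⟨.rfl, hby⟩), .inr (.inl ⟨.rfl, hby⟩), .inl hay]
      · obtain hay | ⟨-, hby⟩ | ⟨-, hay⟩ := ih
        exacts [.inr (.inr ⟨.rfl, hay⟩), .inl hby, .inr (.inr ⟨.rfl, hay⟩)]
    · have hxz' : (G.deleteEdges {s(a, b)}).Reachable x z :=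
        (deleteEdges_adj.2 ⟨hxz, hab⟩).reachable
      exact ih.imp hxz'.trans (Or.imp (And.imp_left hxz'.trans) (And.imp_left hxz'.trans))

lemma card_connectedComponent_deleteEdges_of_isBridge [Finite V] (he : e ∈ G.edgeSet)
    (hbridge : G.IsBridge e) :
    Nat.card (G.deleteEdges {e}).ConnectedComponent = Nat.card G.ConnectedComponent + 1 := by
  classical
  induction e using Sym2.ind with | _ a b
  set F := G.deleteEdges {s(a, b)}
  have hFG : F ≤ G := deleteEdges_le _
  have hab : ¬ F.Reachable a b := isBridge_iff.1 hbridge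
  -- Restoring the edge `ab` merges the component of `b` into that of `a` and changes no other.
  let merge : {c : F.ConnectedComponent // c ≠ F.connectedComponentMk b} → G.ConnectedComponent :=
    fun c ↦ c.1.map (Hom.ofLE hFG)
  have merge_injective : merge.Injective := by
    rintro ⟨⟨x⟩, hx⟩ ⟨⟨y⟩, hy⟩ hxy
    have hxb : ¬ F.Reachable x b := fun h ↦ hx (ConnectedComponent.sound h)
    have hyb : ¬ F.Reachable y b := fun h ↦ hy (ConnectedComponent.sound h)
    obtain h | ⟨-, hby⟩ | ⟨hxb', -⟩ :=
      reachable_deleteEdges_singleton_or a b (ConnectedComponent.exact hxy)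
    · exact Subtype.ext (ConnectedComponent.sound h)
    · exact absurd hby.symm hyb
    · exact absurd hxb' hxb
  have merge_surjective : merge.Surjective := by
    rintro ⟨x⟩
    by_cases hxb : F.Reachable x b
    · exact ⟨⟨F.connectedComponentMk a, hab ∘ ConnectedComponent.exact⟩,
        ConnectedComponent.sound ((Adj.reachable he).trans (hxb.mono hFG).symm)⟩
    · exact ⟨⟨F.connectedComponentMk x, hxb ∘ ConnectedComponent.exact⟩, rfl⟩
  rw [← Nat.card_eq_of_bijective merge ⟨merge_injective, merge_surjective⟩, ← Finite.card_option]
  exact (Nat.card_congr (Equiv.optionSubtypeNe _)).symm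

lemma card_connectedComponent_add_ncard_edgeSet_of_isAcyclic [Finite V] (hG : G.IsAcyclic) :
    Nat.card G.ConnectedComponent + G.edgeSet.ncard = Nat.card V := by
  induction hk : G.edgeSet.ncard generalizing G with
  | zero =>
    obtain rfl : G = ⊥ := by rwa [Set.ncard_eq_zero, edgeSet_eq_empty] at hk
    exact (Nat.card_eq_of_bijective (connectedComponentMk ⊥)
      ⟨fun _ _ h ↦ reachable_bot.1 (ConnectedComponent.exact h), Quot.mk_surjective⟩).symm
  | succ k ih =>
    obtain ⟨e, he⟩ : G.edgeSet.Nonempty := Set.nonempty_of_ncard_ne_zero (by lia)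
    have hcard := card_connectedComponent_deleteEdges_of_isBridge he
      (isAcyclic_iff_forall_isBridge.1 hG he)
    have hdelete := ih (hG.anti (deleteEdges_le {e})) (by
      rw [edgeSet_deleteEdges, Set.ncard_sdiff_singleton_of_mem he, hk, Nat.add_sub_cancel])
    lia

lemma not_reachable_deleteEdges_singleton_of_mem_edges (hG : G.IsAcyclic) {p : G.Walk u v}
    (hp : p.IsPath) (he : e ∈ p.edges) : ¬ (G.deleteEdges {e}).Reachable u v := by
  intro h
  obtain ⟨q, hq⟩ := h.exists_isPath
  have hle : G.deleteEdges {e} ≤ G := deleteEdges_le _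
  obtain rfl : p = q.mapLe hle := congrArg Subtype.val
    ((hG.subsingleton_path u v).elim ⟨p, hp⟩ ⟨_, hq.mapLe hle⟩)
  rw [Walk.edges_mapLe_eq_edges] at he
  have he' := q.edges_subset_edgeSet he
  rw [edgeSet_deleteEdges] at he'
  exact he'.2 rfl

lemma isTree_deleteEdges_sup_edge_of_not_reachable (hG : G.IsTree)
    (h : ¬ (G.deleteEdges {e}).Reachable u v) : (G.deleteEdges {e} ⊔ edge u v).IsTree := by
  induction e using Sym2.ind with | _ a b
  set F := G.deleteEdges {s(a, b)}
  have hle : F ≤ F ⊔ edge u v := le_sup_left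
  have huv : (F ⊔ edge u v).Reachable u v := by
    have hne : u ≠ v := fun huv ↦ h (huv ▸ .rfl)
    exact Adj.reachable (by simp [edge_adj, hne])
  have hab : (F ⊔ edge u v).Reachable a b := by
    obtain huv' | ⟨hua, hbv⟩ | ⟨hub, hav⟩ :=
      reachable_deleteEdges_singleton_or a b (hG.connected u v)
    · exact absurd huv' h
    · exact (hua.mono hle).symm.trans (huv.trans (hbv.mono hle).symm)
    · exact (hav.mono hle).trans (huv.symm.trans (hub.mono hle))
  have hadj : G.Adj ≤ (F ⊔ edge u v).Reachable := by
    intro x y hxy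
    by_cases hxyab : s(x, y) = s(a, b)
    · obtain ⟨rfl, rfl⟩ | ⟨rfl, rfl⟩ := Sym2.eq_iff.1 hxyab
      exacts [hab, hab.symm]
    · exact (hle (deleteEdges_adj.2 ⟨hxy, hxyab⟩)).reachable
  have hreach := reachable_le_reachable_of_adj_le_reachable hadj
  have := hG.connected.nonempty
  exact ⟨⟨fun x y ↦ hreach x y (hG.connected x y)⟩,
    (hG.isAcyclic.anti (deleteEdges_le _)).sup_edge_of_not_reachable h⟩

end Graph

section Weighted

open SimpleGraph

variable {V R : Type*} {G T : SimpleGraph V} {w : Sym2 V → R}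

/-- The superlevel graph of a weighted graph `(G, w)` at the threshold `θ`: all the vertices of `G`,
and those of its edges whose weight is at least `θ`. -/
def superlevelGraph [LE R] (G : SimpleGraph V) (w : Sym2 V → R) (θ : R) : SimpleGraph V :=
  G.deleteEdges {e | ¬ θ ≤ w e}

lemma edgeSet_superlevelGraph [LE R] (G : SimpleGraph V) (w : Sym2 V → R) (θ : R) :
    (superlevelGraph G w θ).edgeSet = {e | e ∈ G.edgeSet ∧ θ ≤ w e} := by
  ext e
  simp [superlevelGraph]

lemma superlevelGraph_fromEdgeSet [LE R] (s : Set (Sym2 V)) (w : Sym2 V → R) (θ : R) :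
    superlevelGraph (fromEdgeSet s) w θ = fromEdgeSet {e | e ∈ s ∧ θ ≤ w e} := by
  ext u v
  simp only [superlevelGraph, deleteEdges_adj, fromEdgeSet_adj, Set.mem_ofPred_eq, not_not]
  exact and_right_comm

/-- A maximum-weight spanning tree of the weighted graph `(G, w)`, encoded as a graph on the vertex
type of `G`. Weights are finite sums `∑ᶠ`, which are `0` by convention on infinite supports, so the
notion is meant for finite vertex types. -/
structure IsMaxSpanningTree [AddCommMonoid R] [LE R] (G : SimpleGraph V) (w : Sym2 V → R)
    (T : SimpleGraph V) : Prop where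
  le : T ≤ G
  isTree : T.IsTree
  finsum_le : ∀ T' ≤ G, T'.IsTree → ∑ᶠ e ∈ T'.edgeSet, w e ≤ ∑ᶠ e ∈ T.edgeSet, w e

variable [Finite V] [AddCommMonoid R] [PartialOrder R] [IsOrderedCancelAddMonoid R]

namespace IsMaxSpanningTree

lemma weight_le_of_not_reachable_deleteEdges (hT : IsMaxSpanningTree G w T) {u v : V}
    (huv : G.Adj u v) {f : Sym2 V} (hf : ¬ (T.deleteEdges {f}).Reachable u v) :
    w s(u, v) ≤ w f := by
  have hfT : f ∈ T.edgeSet := by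
    by_contra hfT
    rw [deleteEdges_eq_self.2 (Set.disjoint_singleton_right.2 hfT)] at hf
    exact hf (hT.isTree.connected u v)
  have huvT : s(u, v) ∉ T.edgeSet \ {f} := by
    rw [← edgeSet_deleteEdges]
    exact fun h ↦ hf (Adj.reachable h)
  have hexchange := hT.finsum_le (T.deleteEdges {f} ⊔ edge u v)
    (sup_le ((deleteEdges_le _).trans hT.le) ((edge_le_iff G).2 (.inr huv)))
    (isTree_deleteEdges_sup_edge_of_not_reachable hT.isTree hf)
  refine le_of_add_le_add_right (a := ∑ᶠ e ∈ T.edgeSet \ {f}, w e) ?_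
  calc w s(u, v) + ∑ᶠ e ∈ T.edgeSet \ {f}, w e
      = ∑ᶠ e ∈ (T.deleteEdges {f} ⊔ edge u v).edgeSet, w e := by
        rw [edgeSet_sup, edgeSet_deleteEdges, edgeSet_edge_of_ne huv.ne, Set.union_singleton,
          finsum_mem_insert _ huvT (Set.toFinite _)]
    _ ≤ ∑ᶠ e ∈ T.edgeSet, w e := hexchange
    _ = w f + ∑ᶠ e ∈ T.edgeSet \ {f}, w e := by
        rw [← finsum_mem_insert _ (by simp) (Set.toFinite _), Set.insert_sdiff_self_of_mem hfT]

lemma reachable_superlevelGraph (hT : IsMaxSpanningTree G w T) (θ : R) :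
    (superlevelGraph T w θ).Reachable = (superlevelGraph G w θ).Reachable := by
  refine le_antisymm (Reachable.mono' (deleteEdges_mono hT.le)) ?_
  refine reachable_le_reachable_of_adj_le_reachable fun u v huv ↦ ?_
  obtain ⟨huvG, huvθ⟩ := deleteEdges_adj.1 huv
  obtain ⟨p, hp⟩ := hT.isTree.connected.exists_isPath u v
  refine ⟨p.transfer _ fun f hf ↦ ?_⟩
  have hwf : w s(u, v) ≤ w f := hT.weight_le_of_not_reachable_deleteEdges huvG
    (not_reachable_deleteEdges_singleton_of_mem_edges hT.isTree.isAcyclic hp hf)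
  rw [edgeSet_superlevelGraph]
  exact ⟨p.edges_subset_edgeSet hf, (not_not.1 huvθ).trans hwf⟩

end IsMaxSpanningTree

theorem point_interval_count_cc_general (hT : IsMaxSpanningTree G w T) (θ : R) :
    Nat.card (superlevelGraph G w θ).ConnectedComponent + {e | e ∈ T.edgeSet ∧ θ ≤ w e}.ncard =
      Nat.card V := by
  have hforest : (superlevelGraph T w θ).IsAcyclic := hT.isTree.isAcyclic.anti (deleteEdges_le _)
  have hcc : Nat.card (superlevelGraph G w θ).ConnectedComponent =
      Nat.card (superlevelGraph T w θ).ConnectedComponent :=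
    congrArg (Nat.card <| Quot ·) (hT.reachable_superlevelGraph θ).symm
  rw [hcc, ← edgeSet_superlevelGraph]
  exact card_connectedComponent_add_ncard_edgeSet_of_isAcyclic hforest

end Weighted

/-- Counting connected components in the point-interval setting: with `T` the
maximum-total-timestamp spanning tree of the subgraph of edges with timestamp
at most `t₂`, the number of connected components of the subgraph of edges with
timestamps in `[t₁, t₂]` equals `n` minus the number of edges of `T` with
timestamp at least `t₁`. -/
theorem point_interval_count_cc {V : Type*} [Fintype V] (n : ℕ)
    (hcard : Fintype.card V = n)
    (G : SimpleGraph V) (t : Sym2 V → ℝ) (hinj : Set.InjOn t G.edgeSet)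
    (t₁ t₂ : ℝ) (ht : t₁ ≤ t₂)
    (hconn : (SimpleGraph.fromEdgeSet {e | e ∈ G.edgeSet ∧ t e ≤ t₂}).Connected)
    (T : SimpleGraph V)
    (hT : T ≤ SimpleGraph.fromEdgeSet {e | e ∈ G.edgeSet ∧ t e ≤ t₂})
    (hTc : T.Connected) (hTa : T.IsAcyclic)
    (hmax : ∀ T' : SimpleGraph V,
      T' ≤ SimpleGraph.fromEdgeSet {e | e ∈ G.edgeSet ∧ t e ≤ t₂} →
      T'.Connected → T'.IsAcyclic →
      (∑ᶠ e ∈ T'.edgeSet, t e) ≤ ∑ᶠ e ∈ T.edgeSet, t e) :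
    Nat.card (SimpleGraph.fromEdgeSet
        {e | e ∈ G.edgeSet ∧ t₁ ≤ t e ∧ t e ≤ t₂}).ConnectedComponent =
      n - {e | e ∈ T.edgeSet ∧ t₁ ≤ t e}.ncard := by
  rw [← hcard, ← Nat.card_eq_fintype_card, ← point_interval_count_cc_general
    ⟨hT, ⟨hTc, hTa⟩, fun T' hle hT' ↦ hmax T' hle hT'.connected hT'.isAcyclic⟩ t₁]
  simp only [superlevelGraph_fromEdgeSet, Set.mem_ofPred_eq, and_assoc, and_comm (a := t₁ ≤ _),
    Nat.add_sub_cancel]
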